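/- In the group decision dinner, every SPE is conflict-free: for every SPE s, every turn t, every history h of length t−1, every morsel x ∉ h, and every player j ≠ P t, it is not the case that B_j(O_s(h)) <_j B_j(O_s(h ++ [x])). That is, no group can change its decision at a node so that any one member of the group receives a strictly more enjoyable plate. -/

import Mathlib

/-- The plate of player `i` under play sequence `a`, with turn order `P`. -/
def plate {M : Type*} [DecidableEq M] {m k : ℕ} (P : Fin m → Fin k) (a : Fin m → M)
    (i : Fin k) : Finset M :=
  (Finset.univ.filter fun t => P t = i).image a

/-- Pairwise comparison of plates with respect to a morsel ordering `le`. -/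
def PlateLE {M : Type*} (le : M → M → Prop) (A B : Finset M) : Prop :=
  ∃ f : A → B, Function.Bijective f ∧ ∀ x : A, le x.1 (f x).1

/-- Strict pairwise comparison of plates. -/
def PlateLT {M : Type*} (le : M → M → Prop) (A B : Finset M) : Prop :=
  PlateLE le A B ∧ A ≠ B

/-- The knight order of player `i` on play sequences. -/
def KnightLT {M : Type*} [DecidableEq M] {m k : ℕ} (P : Fin m → Fin k)
    (ord : Fin k → LinearOrder M) (i : Fin k) (a b : Fin m → M) : Prop :=
  ((∀ j, j ≠ i → PlateLE (ord j).le (plate P a j) (plate P b j)) ∧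
      ∃ j, j ≠ i ∧ PlateLT (ord j).le (plate P a j) (plate P b j)) ∨
    ((∀ j, j ≠ i → plate P a j = plate P b j) ∧
      PlateLT (ord i).le (plate P a i) (plate P b i))

/-- The lout order of player `i` on play sequences. -/
def LoutLT {M : Type*} {m k : ℕ} (P : Fin m → Fin k)
    (ord : Fin k → LinearOrder M) (i : Fin k) (a b : Fin m → M) : Prop :=
  ∃ t : Fin m, P t = i ∧ (∀ s : Fin m, s < t → a s = b s) ∧ (ord i).lt (a t) (b t)

/-- A strategy profile: assigns to each duplicate-free history of length `< m` a
morsel not occurring in it. -/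
structure Strategy (M : Type*) (m : ℕ) where
  choice : List M → M
  valid : ∀ h : List M, h.Nodup → h.length < m → choice h ∉ h

/-- Iteratively extend a history by the choices prescribed by `s`. -/
def Strategy.extend {M : Type*} {m : ℕ} (s : Strategy M m) : ℕ → List M → List M
  | 0, h => h
  | j + 1, h => Strategy.extend s j (h ++ [s.choice h])

/-- The contingent outcome of strategy profile `s` from history `h`, as a play
sequence. -/
def Strategy.play {M : Type*} {m : ℕ} (s : Strategy M m) (h : List M) : Fin m → M :=
  fun t => (s.extend (m - h.length) h).getD t.val (s.choice [])

/-- Subgame perfect equilibrium with respect to preferences `pref t` at turn `t`. -/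
def SPE {M : Type*} {m : ℕ}
    (pref : Fin m → (Fin m → M) → (Fin m → M) → Prop) (s : Strategy M m) : Prop :=
  ∀ t : Fin m, ∀ h : List M, h.Nodup → h.length = t.val →
    ∀ x : M, x ∉ h → ¬ pref t (s.play h) (s.play (h ++ [x]))

/-- Optimal plays: contingent outcomes of subgame perfect equilibria from the
empty history. -/
def OptimalPlay {M : Type*} {m : ℕ}
    (pref : Fin m → (Fin m → M) → (Fin m → M) → Prop) (a : Fin m → M) : Prop :=
  ∃ s : Strategy M m, SPE pref s ∧ a = s.play []

/-- The greedy play: at each turn `t` the mover `P t` selects her favourite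
remaining morsel. -/
def IsGreedy {M : Type*} {m k : ℕ} (P : Fin m → Fin k) (ord : Fin k → LinearOrder M)
    (a : Fin m → M) : Prop :=
  Function.Injective a ∧
    ∀ t : Fin m, ∀ x : M, (∀ s : Fin m, s < t → a s ≠ x) → x ≠ a t →
      (ord (P t)).lt x (a t)

/-- The group plate of player `i`: the morsels chosen on turns where `i` is NOT
the speaker. -/
def groupPlate {M : Type*} [DecidableEq M] {m k : ℕ} (P : Fin m → Fin k)
    (a : Fin m → M) (i : Fin k) : Finset M :=
  (Finset.univ.filter fun t => P t ≠ i).image a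

/-- The group Pareto order at turn `t`: every non-speaking player receives a
weakly more enjoyable group plate, and at least one receives a strictly more
enjoyable one. -/
def ParetoLT {M : Type*} [DecidableEq M] {m k : ℕ} (P : Fin m → Fin k)
    (ord : Fin k → LinearOrder M) (t : Fin m) (a b : Fin m → M) : Prop :=
  (∀ j, j ≠ P t → PlateLE (ord j).le (groupPlate P a j) (groupPlate P b j)) ∧
    ∃ j, j ≠ P t ∧ PlateLT (ord j).le (groupPlate P a j) (groupPlate P b j)

section Helpers

open Classical in
/-- number of morsels at least `z` in a plate -/
noncomputable def cntGE {M : Type*} (O : LinearOrder M) (A : Finset M) (z : M) : ℕ :=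
  (A.filter fun x => O.le z x).card

theorem plateLE_of_cnt {M : Type*} [DecidableEq M] (O : LinearOrder M) (A B : Finset M)
    (hc : A.card = B.card) (h : ∀ z, cntGE O A z ≤ cntGE O B z) : PlateLE O.le A B := by
  classical
  have hall : ∀ T : Finset A, T.card ≤ (T.biUnion fun x => B.filter fun y => O.le x.1 y).card := by
    intro T
    rcases T.eq_empty_or_nonempty with rfl | hT
    · simp
    · obtain ⟨z, hz, hmin⟩ := @Finset.exists_min_image M A O T (fun x => x.1) hT
      calc T.card = (T.map ⟨Subtype.val, Subtype.val_injective⟩).card := by simp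
        _ ≤ cntGE O A z.1 := by
          apply Finset.card_le_card
          intro x hx
          simp only [Finset.mem_map, Function.Embedding.coeFn_mk] at hx
          obtain ⟨y, hy, rfl⟩ := hx
          simp only [Finset.mem_filter]
          exact ⟨y.2, hmin y hy⟩
        _ ≤ cntGE O B z.1 := h _
        _ ≤ _ := by
          apply Finset.card_le_card
          intro x hx
          simp only [Finset.mem_filter] at hx
          simp only [Finset.mem_biUnion, Finset.mem_filter]
          exact ⟨z, hz, hx⟩
  obtain ⟨f, hf, hfm⟩ := (Finset.all_card_le_biUnion_card_iff_exists_injective _).1 hall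
  have hfm' : ∀ x, f x ∈ B ∧ O.le x.1 (f x) := fun x => by simpa using hfm x
  refine ⟨fun x => ⟨f x, (hfm' x).1⟩, ?_, fun x => (hfm' x).2⟩
  rw [Fintype.bijective_iff_injective_and_card]
  refine ⟨fun x y hxy => hf (by simpa using hxy), by simpa using hc⟩

theorem not_plateLT_of_plateLE {M : Type*} [Fintype M] [DecidableEq M] (O : LinearOrder M)
    (A B : Finset M) (h : PlateLE O.le A B) : ¬ PlateLT O.le B A := by
  classical
  let r : M → ℕ := fun x => (Finset.univ.filter fun y => O.lt y x).card
  have hr : ∀ x y, O.le x y → r x ≤ r y := by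
    intro x y hxy
    apply Finset.card_le_card
    intro w hw
    simp only [Finset.mem_filter, Finset.mem_univ, true_and] at hw ⊢
    exact @lt_of_lt_of_le M O.toPreorder _ _ _ hw hxy
  have hr' : ∀ x y, O.le x y → x ≠ y → r x < r y := by
    intro x y hxy hne
    have hlt : O.lt x y := @lt_of_le_of_ne M O.toPartialOrder _ _ hxy hne
    apply Finset.card_lt_card
    rw [Finset.ssubset_iff_of_subset]
    · refine ⟨x, ?_, ?_⟩
      · simpa using hlt
      · simpa using @lt_irrefl M O.toPreorder x
    · intro w hw
      simp only [Finset.mem_filter, Finset.mem_univ, true_and] at hw ⊢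
      exact @lt_trans M O.toPreorder _ _ _ hw hlt
  have key : ∀ A B : Finset M, ∀ f : A → B, Function.Bijective f →
      ∑ x : A, r (f x).1 = ∑ x ∈ B, r x := by
    intro A B f hf
    rw [← Finset.sum_coe_sort B]
    exact hf.sum_comp (fun y : B => r y.1)
  rintro ⟨⟨g, hg, hgl⟩, hne⟩
  obtain ⟨f, hf, hfl⟩ := h
  have h1 := key _ _ f hf
  have h2 := key _ _ g hg
  rw [← Finset.sum_coe_sort B] at h1
  rw [← Finset.sum_coe_sort A] at h2
  have h3 : ∑ x : A, r x.1 ≤ ∑ x : A, r (f x).1 := Finset.sum_le_sum fun x _ => hr _ _ (hfl x)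
  have h4 : ∑ x : B, r x.1 < ∑ x : B, r (g x).1 := by
    apply Finset.sum_lt_sum (fun x _ => hr _ _ (hgl x))
    by_contra hcon
    push Not at hcon
    have hid : ∀ x : B, x.1 = (g x).1 := by
      intro x
      by_contra hx
      exact absurd (hr' _ _ (hgl x) hx) (not_lt.2 (hcon x (Finset.mem_univ _)))
    apply hne
    ext x
    constructor
    · intro hx
      have hxx : x = (g ⟨x, hx⟩).1 := hid ⟨x, hx⟩
      rw [hxx]
      exact (g ⟨x, hx⟩).2
    · intro hx
      obtain ⟨y, hy⟩ := hg.2 ⟨x, hx⟩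
      have hyx : y.1 = x := by
        have := hid y
        rwa [hy] at this
      rw [← hyx]
      exact y.2
  omega

open Classical in
/-- Number of morsels at least `z` obtained by `j` when the players in the list
successively take their least preferred remaining morsel. -/
noncomputable def gcnt {M : Type*} [DecidableEq M] {k : ℕ} (ord : Fin k → LinearOrder M) (j : Fin k) (z : M) :
    List (Fin k) → Finset M → ℕ
  | [], _ => 0
  | i :: L, R =>
    if h : ∃ p ∈ R, ∀ q ∈ R, (ord i).le p q then
      (if i = j ∧ (ord j).le z h.choose then 1 else 0) + gcnt ord j z L (R.erase h.choose)
    else 0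

open Classical in
theorem gcnt_cons {M : Type*} [DecidableEq M] {k : ℕ} (ord : Fin k → LinearOrder M) (j : Fin k) (z : M)
    (i : Fin k) (L : List (Fin k)) (R : Finset M) (p : M) (hp : p ∈ R)
    (hmin : ∀ q ∈ R, (ord i).le p q) :
    gcnt ord j z (i :: L) R =
      (if i = j ∧ (ord j).le z p then 1 else 0) + gcnt ord j z L (R.erase p) := by
  have h : ∃ p ∈ R, ∀ q ∈ R, (ord i).le p q := ⟨p, hp, hmin⟩
  have he : h.choose = p :=
    (ord i).le_antisymm _ _ (h.choose_spec.2 p hp) (hmin _ h.choose_spec.1)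
  rw [gcnt, dif_pos h, he]

theorem exists_minOrd {M : Type*} (O : LinearOrder M) (R : Finset M) (hR : R.Nonempty) :
    ∃ p ∈ R, ∀ q ∈ R, O.le p q :=
  @Finset.exists_min_image M M O R id hR

open Classical in
theorem gcnt_erase_le {M : Type*} [DecidableEq M] {k : ℕ} (ord : Fin k → LinearOrder M) (j : Fin k) (z : M)
    (L : List (Fin k)) : ∀ (R : Finset M) (y : M), y ∈ R → L.length + 1 ≤ R.card →
      gcnt ord j z L R ≤ gcnt ord j z L (R.erase y) := by
  induction L with
  | nil => intros; simp [gcnt]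
  | cons i L ih =>
    intro R y hy hc
    simp only [List.length_cons] at hc
    obtain ⟨p, hp, hmin⟩ := exists_minOrd (ord i) R ⟨y, hy⟩
    rw [gcnt_cons ord j z i L R p hp hmin]
    have hcp := Finset.card_erase_of_mem hp
    by_cases hpy : p = y
    · subst hpy
      obtain ⟨p', hp', hmin'⟩ := exists_minOrd (ord i) (R.erase p)
        (Finset.card_pos.1 (by omega))
      rw [gcnt_cons ord j z i L _ p' hp' hmin']
      refine Nat.add_le_add ?_ (ih _ _ hp' (by omega))
      have hle := hmin p' (Finset.mem_of_mem_erase hp')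
      by_cases hc1 : i = j ∧ (ord j).le z p
      · have hc2 : i = j ∧ (ord j).le z p' := by
          refine ⟨hc1.1, (ord j).le_trans _ _ _ hc1.2 ?_⟩
          rw [← hc1.1]; exact hle
        rw [if_pos hc1, if_pos hc2]
      · rw [if_neg hc1]; exact Nat.zero_le _
    · rw [gcnt_cons ord j z i L (R.erase y) p (Finset.mem_erase.2 ⟨hpy, hp⟩)
        (fun q hq => hmin q (Finset.mem_of_mem_erase hq))]
      rw [Finset.erase_right_comm]
      exact Nat.add_le_add_left
        (ih _ _ (Finset.mem_erase.2 ⟨fun h => hpy h.symm, hy⟩) (by omega)) _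

open Classical in
theorem exists_leftover {M : Type*} [DecidableEq M] {k : ℕ} (ord : Fin k → LinearOrder M) (i : Fin k)
    (L : List (Fin k)) : ∀ (R : Finset M), R.card = L.length + 1 → ∃ x ∈ R, ∀ j z,
      gcnt ord j z L (R.erase x) = gcnt ord j z L R ∧
      gcnt ord j z (L ++ [i]) R = gcnt ord j z L R + (if i = j ∧ (ord j).le z x then 1 else 0) := by
  induction L with
  | nil =>
    intro R hc
    obtain ⟨x, rfl⟩ := Finset.card_eq_one.1 hc
    refine ⟨x, by simp, fun j z => ⟨by simp [gcnt], ?_⟩⟩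
    rw [List.nil_append, gcnt_cons ord j z i [] {x} x (by simp)
      (by intro q hq; rw [Finset.mem_singleton.1 hq]; exact (ord i).le_refl _)]
    simp [gcnt]
  | cons i0 L ih =>
    intro R hc
    simp only [List.length_cons] at hc
    obtain ⟨p, hp, hmin⟩ := exists_minOrd (ord i0) R (Finset.card_pos.1 (by omega))
    have hcp := Finset.card_erase_of_mem hp
    obtain ⟨x, hx, hxx⟩ := ih (R.erase p) (by omega)
    have hx' := Finset.mem_erase.1 hx
    refine ⟨x, hx'.2, fun j z => ⟨?_, ?_⟩⟩
    · rw [gcnt_cons ord j z i0 L R p hp hmin,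
        gcnt_cons ord j z i0 L (R.erase x) p (Finset.mem_erase.2 ⟨fun h => hx'.1 h.symm, hp⟩)
        (fun q hq => hmin q (Finset.mem_of_mem_erase hq)), Finset.erase_right_comm, (hxx j z).1]
    · rw [List.cons_append, gcnt_cons ord j z i0 _ R p hp hmin,
        gcnt_cons ord j z i0 L R p hp hmin, (hxx j z).2, add_assoc]

/-! ### Plays -/

theorem nodup_snoc {M : Type*} {h : List M} (hn : h.Nodup) {x : M} (hx : x ∉ h) :
    (h ++ [x]).Nodup := by
  rw [List.nodup_append]
  refine ⟨hn, by simp, ?_⟩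
  intro a ha b hb
  rw [List.mem_singleton.1 hb]
  rintro rfl
  exact hx ha

theorem extend_spec {M : Type*} {m : ℕ} (s : Strategy M m) (r : ℕ) : ∀ h : List M, h.Nodup →
    h.length + r = m → (s.extend r h).Nodup ∧ (s.extend r h).length = m ∧ h <+: s.extend r h := by
  induction r with
  | zero => intro h hn hl; exact ⟨hn, by simpa [Strategy.extend] using hl, List.prefix_rfl⟩
  | succ r ih =>
    intro h hn hl
    have hv := s.valid h hn (by omega)
    obtain ⟨h1, h2, h3⟩ := ih (h ++ [s.choice h])
      (nodup_snoc hn hv)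
      (by simp only [List.length_append, List.length_singleton]; omega)
    exact ⟨h1, h2, (List.prefix_append _ _).trans h3⟩

theorem play_inj {M : Type*} {m : ℕ} (s : Strategy M m) (h : List M) (hn : h.Nodup)
    (hl : h.length ≤ m) : Function.Injective (s.play h) := by
  obtain ⟨h1, h2, h3⟩ := extend_spec s (m - h.length) h hn (by omega)
  intro a b hab
  have ha := a.2
  have hb := b.2
  simp only [Strategy.play] at hab
  rw [List.getD_eq_getElem _ _ (by omega), List.getD_eq_getElem _ _ (by omega)] at hab
  exact Fin.ext ((h1.getElem_inj_iff).1 hab)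

theorem play_prefix {M : Type*} {m : ℕ} (s : Strategy M m) (h : List M) (hn : h.Nodup)
    (hl : h.length ≤ m) (t : Fin m) (ht : t.val < h.length) : s.play h t = h[t.val] := by
  obtain ⟨h1, h2, h3⟩ := extend_spec s (m - h.length) h hn (by omega)
  have := t.2
  simp only [Strategy.play]
  rw [List.getD_eq_getElem _ _ (by omega)]
  exact (h3.getElem ht).symm

theorem play_step {M : Type*} {m : ℕ} (s : Strategy M m) (h : List M)
    (hl : h.length < m) : s.play (h ++ [s.choice h]) = s.play h := by
  funext t
  simp only [Strategy.play, List.length_append, List.length_singleton]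
  have : m - h.length = (m - (h.length + 1)) + 1 := by omega
  rw [this, Strategy.extend]

open Classical in
/-- count of speaker turns of `j` (from turn `t0` on) with morsel at least `z` -/
noncomputable def dcnt {M : Type*} {m k : ℕ} (P : Fin m → Fin k) (ord : Fin k → LinearOrder M)
    (a : Fin m → M) (t0 : ℕ) (j : Fin k) (z : M) : ℕ :=
  (Finset.univ.filter fun t : Fin m => t0 ≤ t.val ∧ P t = j ∧ (ord j).le z (a t)).card

open Classical in
theorem dcnt_succ {M : Type*} {m k : ℕ} (P : Fin m → Fin k) (ord : Fin k → LinearOrder M)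
    (a : Fin m → M) (t : Fin m) (j : Fin k) (z : M) :
    dcnt P ord a t.val j z =
      dcnt P ord a (t.val + 1) j z + (if P t = j ∧ (ord j).le z (a t) then 1 else 0) := by
  unfold dcnt
  split_ifs with hc
  · rw [← Finset.card_insert_of_notMem (a := t) (by simp)]
    congr 1
    ext u
    simp only [Finset.mem_filter, Finset.mem_univ, true_and, Finset.mem_insert]
    constructor
    · rintro ⟨h1, h2⟩
      by_cases hu : u = t
      · exact Or.inl hu
      · exact Or.inr ⟨by have : u.val ≠ t.val := fun h => hu (Fin.ext h)
                         omega, h2⟩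
    · rintro (rfl | ⟨h1, h2⟩)
      · exact ⟨le_rfl, hc⟩
      · exact ⟨by omega, h2⟩
  · rw [add_zero]
    congr 1
    ext u
    simp only [Finset.mem_filter, Finset.mem_univ, true_and]
    constructor
    · rintro ⟨h1, h2⟩
      by_cases hu : u = t
      · subst hu; exact absurd h2 hc
      · exact ⟨by have : u.val ≠ t.val := fun h => hu (Fin.ext h)
                  omega, h2⟩
    · rintro ⟨h1, h2⟩
      exact ⟨by omega, h2⟩

theorem dcnt_split {M : Type*} {m k : ℕ} (P : Fin m → Fin k) (ord : Fin k → LinearOrder M)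
    (a b : Fin m → M) (t0 : ℕ) (hab : ∀ t : Fin m, t.val < t0 → a t = b t) (j : Fin k) (z : M) :
    dcnt P ord a 0 j z + dcnt P ord b t0 j z = dcnt P ord b 0 j z + dcnt P ord a t0 j z := by
  classical
  have key : ∀ c : Fin m → M, dcnt P ord c 0 j z = dcnt P ord c t0 j z +
      (Finset.univ.filter fun t : Fin m => t.val < t0 ∧ P t = j ∧ (ord j).le z (c t)).card := by
    intro c
    unfold dcnt
    rw [← Finset.card_union_of_disjoint]
    · congr 1
      ext u
      simp only [Finset.mem_filter, Finset.mem_univ, true_and, Finset.mem_union]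
      have := lt_or_ge u.val t0
      have h0 := Nat.zero_le u.val
      tauto
    · rw [Finset.disjoint_filter]
      rintro u - ⟨h1, -⟩ ⟨h2, -⟩
      omega
  rw [key a, key b]
  have : (Finset.univ.filter fun t : Fin m => t.val < t0 ∧ P t = j ∧ (ord j).le z (a t)) =
      (Finset.univ.filter fun t : Fin m => t.val < t0 ∧ P t = j ∧ (ord j).le z (b t)) := by
    ext u
    simp only [Finset.mem_filter, Finset.mem_univ, true_and]
    constructor
    · rintro ⟨h1, h2⟩; rw [hab u h1] at h2; exact ⟨h1, h2⟩
    · rintro ⟨h1, h2⟩; rw [← hab u h1] at h2; exact ⟨h1, h2⟩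
  rw [this]
  omega

theorem dcnt_zero_le {M : Type*} {m k : ℕ} (P : Fin m → Fin k) (ord : Fin k → LinearOrder M)
    (a b : Fin m → M) (t0 : ℕ) (hab : ∀ t : Fin m, t.val < t0 → a t = b t) (j : Fin k) (z : M)
    (h : dcnt P ord a t0 j z ≤ dcnt P ord b t0 j z) :
    dcnt P ord a 0 j z ≤ dcnt P ord b 0 j z := by
  have := dcnt_split P ord a b t0 hab j z
  omega

theorem cnt_groupPlate {M : Type*} [Fintype M] [DecidableEq M] {m k : ℕ}
    (hm : m = Fintype.card M) (P : Fin m → Fin k) (ord : Fin k → LinearOrder M)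
    (a : Fin m → M) (ha : Function.Injective a) (j : Fin k) (z : M) :
    cntGE (ord j) (groupPlate P a j) z + dcnt P ord a 0 j z = cntGE (ord j) Finset.univ z := by
  classical
  have hb : Function.Bijective a :=
    (Fintype.bijective_iff_injective_and_card a).2 ⟨ha, by simpa using hm⟩
  have h1 : cntGE (ord j) (groupPlate P a j) z =
      (Finset.univ.filter fun t : Fin m => P t ≠ j ∧ (ord j).le z (a t)).card := by
    rw [← Finset.card_image_of_injective _ ha]
    unfold cntGE groupPlate
    congr 1
    ext x
    simp only [Finset.mem_filter, Finset.mem_image, Finset.mem_univ, true_and]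
    constructor
    · rintro ⟨⟨t, h1, rfl⟩, h2⟩; exact ⟨t, ⟨h1, h2⟩, rfl⟩
    · rintro ⟨t, ⟨h1, h2⟩, rfl⟩; exact ⟨⟨t, h1, rfl⟩, h2⟩
  have h2 : cntGE (ord j) Finset.univ z =
      (Finset.univ.filter fun t : Fin m => (ord j).le z (a t)).card := by
    rw [← Finset.card_image_of_injective _ ha]
    unfold cntGE
    congr 1
    ext x
    simp only [Finset.mem_filter, Finset.mem_image, Finset.mem_univ, true_and]
    constructor
    · intro h; obtain ⟨t, rfl⟩ := hb.2 x; exact ⟨t, h, rfl⟩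
    · rintro ⟨t, h, rfl⟩; exact h
  rw [h1, h2]
  unfold dcnt
  rw [← Finset.card_union_of_disjoint]
  · congr 1
    ext u
    simp only [Finset.mem_filter, Finset.mem_univ, true_and, Finset.mem_union]
    have h0 := Nat.zero_le u.val
    tauto
  · rw [Finset.disjoint_filter]
    rintro u - ⟨h1, -⟩ ⟨-, h2, -⟩
    exact h1 h2

theorem plateLE_of_dcnt {M : Type*} [Fintype M] [DecidableEq M] {m k : ℕ}
    (hm : m = Fintype.card M) (P : Fin m → Fin k) (ord : Fin k → LinearOrder M)
    (a b : Fin m → M) (ha : Function.Injective a) (hb : Function.Injective b) (j : Fin k)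
    (h : ∀ z, dcnt P ord b 0 j z ≤ dcnt P ord a 0 j z) :
    PlateLE (ord j).le (groupPlate P a j) (groupPlate P b j) := by
  apply plateLE_of_cnt
  · unfold groupPlate
    rw [Finset.card_image_of_injective _ ha, Finset.card_image_of_injective _ hb]
  · intro z
    have h1 := cnt_groupPlate hm P ord a ha j z
    have h2 := cnt_groupPlate hm P ord b hb j z
    have := h z
    omega

/-- If the group plates of all players but `i` agree, so does that of `i`. -/
theorem groupPlate_eq_of_others {M : Type*} [Fintype M] [DecidableEq M] {m k : ℕ}
    (hm : m = Fintype.card M) (P : Fin m → Fin k)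
    (a b : Fin m → M) (ha : Function.Injective a) (hb : Function.Injective b) (i : Fin k)
    (h : ∀ j, j ≠ i → groupPlate P a j = groupPlate P b j) :
    groupPlate P a i = groupPlate P b i := by
  have mem : ∀ c : Fin m → M, Function.Injective c → ∀ t j, c t ∈ groupPlate P c j ↔ P t ≠ j := by
    intro c hc t j
    simp only [groupPlate, Finset.mem_image, Finset.mem_filter, Finset.mem_univ, true_and]
    constructor
    · rintro ⟨u, hu, he⟩; rwa [← hc he]
    · intro h; exact ⟨t, h, rfl⟩
  have sur : ∀ c : Fin m → M, Function.Injective c → Function.Surjective c := fun c hc =>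
    ((Fintype.bijective_iff_injective_and_card c).2 ⟨hc, by simpa using hm⟩).2
  ext x
  obtain ⟨t, rfl⟩ := sur a ha x
  obtain ⟨u, hu⟩ := sur b hb (a t)
  have hj : ∀ j, j ≠ i → (P t ≠ j ↔ P u ≠ j) := by
    intro j hji
    rw [← mem a ha, ← mem b hb, hu, h j hji]
  rw [mem a ha, ← hu, mem b hb]
  constructor
  · intro h1 h2
    exact (hj (P t) h1).2 (by rw [h2]; exact h1.symm) rfl
  · intro h1 h2
    exact (hj (P u) h1).1 (by rw [h2]; exact h1.symm) rfl

/-- players of the turns from `t` on, last turn first -/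
def revTurns {m k : ℕ} (P : Fin m → Fin k) (t : ℕ) : List (Fin k) :=
  ((List.ofFn P).drop t).reverse

theorem revTurns_step {m k : ℕ} (P : Fin m → Fin k) (t : Fin m) :
    revTurns P t.val = revTurns P (t.val + 1) ++ [P t] := by
  unfold revTurns
  rw [List.drop_eq_getElem_cons (by simp), List.reverse_cons]
  simp

theorem revTurns_length {m k : ℕ} (P : Fin m → Fin k) (t : ℕ) :
    (revTurns P t).length = m - t := by
  simp [revTurns]

theorem rem_snoc {M : Type*} [Fintype M] [DecidableEq M] (h : List M) (x : M) :
    Finset.univ \ (h ++ [x]).toFinset = (Finset.univ \ h.toFinset).erase x := by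
  ext y
  simp

theorem rem_card {M : Type*} [Fintype M] [DecidableEq M] (h : List M) (hn : h.Nodup) :
    (Finset.univ \ h.toFinset).card = Fintype.card M - h.length := by
  rw [Finset.card_univ_sdiff, List.toFinset_card_of_nodup hn]

/-- The statement that outcomes from `h` have the reverse-greedy plates. -/
def GoodAt {M : Type*} [Fintype M] [DecidableEq M] {m k : ℕ}
    (P : Fin m → Fin k) (ord : Fin k → LinearOrder M) (s : Strategy M m) (h : List M) : Prop :=
  ∀ j z, dcnt P ord (s.play h) h.length j z =
    gcnt ord j z (revTurns P h.length) (Finset.univ \ h.toFinset)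

theorem play_agree {M : Type*} {m : ℕ} (s : Strategy M m) (h : List M) (hn : h.Nodup)
    (hl : h.length < m) (x y : M) (hx : x ∉ h) (hy : y ∉ h) (t : Fin m) (ht : t.val < h.length) :
    s.play (h ++ [x]) t = s.play (h ++ [y]) t := by
  rw [play_prefix s _ (nodup_snoc hn hx) (by simp; omega) t (by simp; omega),
    play_prefix s _ (nodup_snoc hn hy) (by simp; omega) t (by simp; omega)]
  rw [List.getElem_append_left ht, List.getElem_append_left ht]

theorem play_at {M : Type*} {m : ℕ} (s : Strategy M m) (h : List M) (hn : h.Nodup)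
    (x : M) (hx : x ∉ h) (t : Fin m) (ht : h.length = t.val) :
    s.play (h ++ [x]) t = x := by
  have := t.2
  rw [play_prefix s _ (nodup_snoc hn hx) (by simp; omega) t (by simp; omega)]
  simp [← ht]

open Classical in
theorem dcnt_snoc {M : Type*} [Fintype M] [DecidableEq M] {m k : ℕ}
    (P : Fin m → Fin k) (ord : Fin k → LinearOrder M) (s : Strategy M m)
    (h : List M) (hn : h.Nodup) (t : Fin m) (ht : h.length = t.val) (x : M) (hx : x ∉ h)
    (hg : GoodAt P ord s (h ++ [x])) (j : Fin k) (z : M) :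
    dcnt P ord (s.play (h ++ [x])) t.val j z =
      gcnt ord j z (revTurns P (t.val + 1)) ((Finset.univ \ h.toFinset).erase x) +
      (if P t = j ∧ (ord j).le z x then 1 else 0) := by
  rw [dcnt_succ, play_at s h hn x hx t ht, ← rem_snoc]
  have := hg j z
  simp only [List.length_append, List.length_singleton, ht] at this
  rw [this]

theorem goodAt {M : Type*} [Fintype M] [DecidableEq M] {m k : ℕ}
    (hm : m = Fintype.card M) (P : Fin m → Fin k) (ord : Fin k → LinearOrder M)
    (s : Strategy M m) (hs : SPE (fun t => ParetoLT P ord t) s) (r : ℕ) :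
    ∀ h : List M, h.Nodup → h.length + r = m → GoodAt P ord s h := by
  classical
  induction r with
  | zero =>
    intro h hn hl j z
    have h0 : revTurns P h.length = [] := List.eq_nil_of_length_eq_zero (by
      rw [revTurns_length]; omega)
    rw [h0, gcnt, dcnt, Finset.card_eq_zero, Finset.filter_eq_empty_iff]
    rintro u - ⟨h1, -⟩
    have := u.2
    omega
  | succ r ih =>
    intro h hn hl
    obtain ⟨t, ht⟩ : ∃ t : Fin m, h.length = t.val := ⟨⟨h.length, by omega⟩, rfl⟩
    have hv := s.valid h hn (by omega)
    have ih' : ∀ y, y ∉ h → GoodAt P ord s (h ++ [y]) := fun y hy =>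
      ih _ (nodup_snoc hn hy) (by simp; omega)
    have inj : ∀ y, y ∉ h → Function.Injective (s.play (h ++ [y])) := fun y hy =>
      play_inj s _ (nodup_snoc hn hy) (by simp; omega)
    have hcard := rem_card h hn
    have hlen := revTurns_length P (t.val + 1)
    obtain ⟨x, hxR, hx⟩ := exists_leftover ord (P t) (revTurns P (t.val + 1))
      (Finset.univ \ h.toFinset) (by omega)
    have hxh : x ∉ h := by simpa using hxR
    have hle : ∀ j, j ≠ P t → PlateLE (ord j).le (groupPlate P (s.play h) j)
        (groupPlate P (s.play (h ++ [x])) j) := by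
      intro j hj
      rw [← play_step s h (by omega)]
      apply plateLE_of_dcnt hm P ord _ _ (inj _ hv) (inj _ hxh)
      intro z
      apply dcnt_zero_le P ord _ _ t.val
        (fun u hu => play_agree s h hn (by omega) _ _ hxh hv u (by omega))
      rw [dcnt_snoc P ord s h hn t ht x hxh (ih' x hxh),
        dcnt_snoc P ord s h hn t ht _ hv (ih' _ hv), (hx j z).1,
        if_neg (fun hc => hj hc.1.symm), if_neg (fun hc => hj hc.1.symm)]
      exact gcnt_erase_le ord j z _ _ _ (by simpa using hv) (by omega)
    have heq : ∀ j, j ≠ P t → groupPlate P (s.play h) j = groupPlate P (s.play (h ++ [x])) j := by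
      intro j hj
      by_contra hne
      exact hs t h hn ht x hxh ⟨hle, j, hj, hle j hj, hne⟩
    have injh := play_inj s h hn (by omega)
    have heq' : ∀ j, groupPlate P (s.play h) j = groupPlate P (s.play (h ++ [x])) j := by
      intro j
      by_cases hj : j = P t
      · rw [hj]
        exact groupPlate_eq_of_others hm P _ _ injh (inj x hxh) _ heq
      · exact heq j hj
    intro j z
    have e0 : dcnt P ord (s.play h) 0 j z = dcnt P ord (s.play (h ++ [x])) 0 j z := by
      have h1 := cnt_groupPlate hm P ord _ injh j z
      have h2 := cnt_groupPlate hm P ord _ (inj x hxh) j z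
      rw [heq' j] at h1
      omega
    have agree : ∀ u : Fin m, u.val < t.val → s.play h u = s.play (h ++ [x]) u := by
      intro u hu
      rw [← play_step s h (by omega)]
      exact play_agree s h hn (by omega) _ _ hv hxh u (by omega)
    have e1 : dcnt P ord (s.play h) t.val j z = dcnt P ord (s.play (h ++ [x])) t.val j z := by
      have := dcnt_split P ord _ _ t.val agree j z
      omega
    rw [ht, e1, dcnt_snoc P ord s h hn t ht x hxh (ih' x hxh), (hx j z).1, revTurns_step,
      (hx j z).2]

end Helpers

/-- in the group decision dinner every SPE is conflict-free: no
group can change its decision at a node so that any one of its members receives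
a strictly more enjoyable plate. -/
theorem group_spe_conflict_free {M : Type*} [Fintype M] [DecidableEq M] {m k : ℕ}
    (hm : m = Fintype.card M) (P : Fin m → Fin k) (ord : Fin k → LinearOrder M)
    (s : Strategy M m) (hs : SPE (fun t => ParetoLT P ord t) s) :
    ∀ t : Fin m, ∀ h : List M, h.Nodup → h.length = t.val →
      ∀ x : M, x ∉ h → ∀ j : Fin k, j ≠ P t →
        ¬ PlateLT (ord j).le (groupPlate P (s.play h) j)
            (groupPlate P (s.play (h ++ [x])) j) := by
  classical
  intro t h hn ht x hx j hj
  have htm := t.2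
  apply not_plateLT_of_plateLE
  have hv := s.valid h hn (by omega)
  apply plateLE_of_dcnt hm P ord _ _
    (play_inj s _ (nodup_snoc hn hx) (by simp; omega)) (play_inj s h hn (by omega))
  intro z
  have hcard := rem_card h hn
  have hlen := revTurns_length P (t.val + 1)
  obtain ⟨y, hyR, hy⟩ := exists_leftover ord (P t) (revTurns P (t.val + 1))
      (Finset.univ \ h.toFinset) (by omega)
  apply dcnt_zero_le P ord _ _ t.val
  · intro u hu
    rw [← play_step s h (by omega)]
    exact play_agree s h hn (by omega) _ _ hv hx u (by omega)
  · have hg := goodAt hm P ord s hs (m - h.length) h hn (by omega) j z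
    rw [ht] at hg
    rw [hg, dcnt_snoc P ord s h hn t ht x hx (goodAt hm P ord s hs (m - (h.length + 1)) _
      (nodup_snoc hn hx) (by simp; omega)), revTurns_step, (hy j z).2,
      if_neg (fun hc => hj hc.1.symm), if_neg (fun hc => hj hc.1.symm)]
    exact gcnt_erase_le ord j z _ _ _ (by simpa using hx) (by omega)
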